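/- arXiv:1911.10488 — 3 statements merged into one kernel-verified Lean document; each statement's English description precedes it below -/
import Mathlib

section
/- Let λ, f > 0 and define Ψ(t) = P(t)·A·Δ(t)·Aᵀ as below. Then Ψ is a fundamental solution of the Schrödinger equation of the two-spin Rabi model: for all t ∈ ℝ, i·(dΨ/dt)(t) = H(t)·Ψ(t), and Ψ(0) is the 4×4 identity matrix. -/
open Matrix Complex Real

noncomputable def Ham (l f t : ℝ) : Matrix (Fin 4) (Fin 4) ℂ :=
  !![(((l+4)/4 : ℝ) : ℂ), 0, ((f/2 : ℝ) : ℂ) * Complex.exp (-Complex.I * t), 0;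
     0, ((-(l/4) : ℝ) : ℂ), ((l/2 : ℝ) : ℂ), ((f/2 : ℝ) : ℂ) * Complex.exp (-Complex.I * t);
     ((f/2 : ℝ) : ℂ) * Complex.exp (Complex.I * t), ((l/2 : ℝ) : ℂ), ((-(l/4) : ℝ) : ℂ), 0;
     0, ((f/2 : ℝ) : ℂ) * Complex.exp (Complex.I * t), 0, (((l-4)/4 : ℝ) : ℂ)]

noncomputable def Pmat (t : ℝ) : Matrix (Fin 4) (Fin 4) ℂ :=
  !![Complex.exp (-Complex.I * t), 0, 0, 0;
     0, 1, 0, 0;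
     0, 0, 1, 0;
     0, 0, 0, Complex.exp (Complex.I * t)]

noncomputable def Amat (l f : ℝ) : Matrix (Fin 4) (Fin 4) ℝ :=
  let α := l / Real.sqrt (f^2 + l^2)
  (1/2 : ℝ) • !![-Real.sqrt (1-α), 1, Real.sqrt (1+α), 1;
                 -Real.sqrt (1+α), -1, -Real.sqrt (1-α), 1;
                 Real.sqrt (1+α), -1, Real.sqrt (1-α), 1;
                 Real.sqrt (1-α), 1, -Real.sqrt (1+α), 1]

noncomputable def AmatC (l f : ℝ) : Matrix (Fin 4) (Fin 4) ℂ :=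
  (Amat l f).map Complex.ofReal

noncomputable def Dmat (l f t : ℝ) : Matrix (Fin 4) (Fin 4) ℂ :=
  Matrix.diagonal
    ![Complex.exp (Complex.I * t * (((2 * Real.sqrt (f^2 + l^2) + l)/4 : ℝ) : ℂ)),
      Complex.exp (Complex.I * t * (((2*f - l)/4 : ℝ) : ℂ)),
      Complex.exp (Complex.I * t * (((l - 2 * Real.sqrt (f^2 + l^2))/4 : ℝ) : ℂ)),
      Complex.exp (-Complex.I * t * (((2*f + l)/4 : ℝ) : ℂ))]

noncomputable def Psi (l f t : ℝ) : Matrix (Fin 4) (Fin 4) ℂ :=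
  Pmat t * AmatC l f * Dmat l f t * (AmatC l f)ᵀ

/-- The algebraic facts on `a = √(1+α)`, `b = √(1-α)`, `r = √(f²+l²)`. -/
lemma rabi_facts (l f : ℝ) (hl : 0 < l) (hf : 0 < f) :
    let r := Real.sqrt (f^2 + l^2)
    let a := Real.sqrt (1 + l / r)
    let b := Real.sqrt (1 - l / r)
    a * a + b * b = 2 ∧ f * a = (r + l) * b ∧ f * b = (r - l) * a := by
  intro r a b
  have hr : 0 < r := Real.sqrt_pos.mpr (by positivity)
  have hr2 : r ^ 2 = f ^ 2 + l ^ 2 := Real.sq_sqrt (by positivity)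
  have hlr : l < r := by nlinarith
  have hα : l / r < 1 := (div_lt_one hr).mpr hlr
  have hα0 : 0 < l / r := by positivity
  have ha : a ^ 2 = 1 + l / r := Real.sq_sqrt (by linarith)
  have hb : b ^ 2 = 1 - l / r := Real.sq_sqrt (by linarith)
  have ha0 : 0 ≤ a := Real.sqrt_nonneg _
  have hb0 : 0 ≤ b := Real.sqrt_nonneg _
  refine ⟨by nlinarith, ?_, ?_⟩
  · have h : (f * a) ^ 2 = ((r + l) * b) ^ 2 := by
      rw [mul_pow, mul_pow, ha, hb]
      field_simp
      linear_combination -hr2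
    exact (pow_left_inj₀ (by positivity) (by positivity) two_ne_zero).mp h
  · have h : (f * b) ^ 2 = ((r - l) * a) ^ 2 := by
      rw [mul_pow, mul_pow, ha, hb]
      field_simp
      linear_combination (-(r - l)) * hr2
    have : 0 ≤ r - l := by linarith
    exact (pow_left_inj₀ (by positivity) (by positivity) two_ne_zero).mp h

/-- Derivative of a complex exponential along the real line. -/
lemma rabi_exp_deriv (c : ℂ) (t : ℝ) :
    HasDerivAt (fun s : ℝ => Complex.exp (c * s)) (c * Complex.exp (c * t)) t := by
  have h1 : HasDerivAt (fun s : ℝ => c * (s : ℂ)) (c * 1) t :=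
    (Complex.ofRealCLM.hasDerivAt (x := t)).const_mul c
  have := h1.cexp
  convert this using 1
  ring

/-- The phases of `P`. -/
noncomputable def rabiN : Fin 4 → ℂ := ![-Complex.I, 0, 0, Complex.I]

/-- The phases of `Δ`. -/
noncomputable def rabiM (l f r : ℂ) : Fin 4 → ℂ :=
  ![Complex.I * ((2 * r + l) / 4), Complex.I * ((2 * f - l) / 4),
    Complex.I * ((l - 2 * r) / 4), -Complex.I * ((2 * f + l) / 4)]

lemma rabi_P (t : ℝ) : Pmat t = Matrix.diagonal (fun i => Complex.exp (rabiN i * t)) := by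
  ext i j
  fin_cases i <;> fin_cases j <;> simp [Pmat, rabiN, Matrix.diagonal]

lemma rabi_D (l f t : ℝ) : Dmat l f t =
    Matrix.diagonal (fun i => Complex.exp (rabiM l f (Real.sqrt (f^2 + l^2) : ℝ) i * t)) := by
  unfold Dmat
  congr 1
  ext i
  fin_cases i <;> simp [rabiM] <;> ring_nf

/-- Intertwining relation `-i H(t) P(t) A = P(t) (N A + A M)`. -/
lemma rabi_intertwine (l f : ℝ) (hl : 0 < l) (hf : 0 < f) (t : ℝ) :
    (-Complex.I) • (Ham l f t * (Pmat t * AmatC l f)) =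
      Pmat t * (Matrix.diagonal rabiN * AmatC l f +
        AmatC l f * Matrix.diagonal (rabiM l f (Real.sqrt (f^2 + l^2) : ℝ))) := by
  obtain ⟨h1, h2, h3⟩ := rabi_facts l f hl hf
  simp only [Ham, Pmat, AmatC, Amat]
  generalize Real.sqrt (f^2 + l^2) = r at *
  generalize Real.sqrt (1 + l / r) = a at *
  generalize Real.sqrt (1 - l / r) = b at *
  have he : Complex.exp (-Complex.I * t) * Complex.exp (Complex.I * t) = 1 := by
    rw [← Complex.exp_add]; simp
  generalize Complex.exp (-Complex.I * t) = e at *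
  generalize Complex.exp (Complex.I * t) = ep at *
  have h2 : (f : ℂ) * a = (r + l) * b := by exact_mod_cast h2
  have h3 : (f : ℂ) * b = (r - l) * a := by exact_mod_cast h3
  ext i j
  simp only [Matrix.smul_apply, Matrix.add_apply, Matrix.mul_apply, Fin.sum_univ_four,
    Matrix.map_apply, Matrix.transpose_apply]
  fin_cases i <;> fin_cases j <;>
    simp [rabiN, rabiM, Matrix.diagonal] <;>
    grind

lemma rabi_orth (l f : ℝ) (hl : 0 < l) (hf : 0 < f) :
    AmatC l f * (AmatC l f)ᵀ = 1 := by
  obtain ⟨h1, -, -⟩ := rabi_facts l f hl hf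
  simp only [AmatC, Amat]
  generalize Real.sqrt (f^2 + l^2) = r at *
  generalize Real.sqrt (1 + l / r) = a at *
  generalize Real.sqrt (1 - l / r) = b at *
  have h1 : (a : ℂ) * a + b * b = 2 := by exact_mod_cast h1
  ext i j
  simp only [Matrix.smul_apply, Matrix.add_apply, Matrix.mul_apply, Fin.sum_univ_four,
    Matrix.map_apply, Matrix.transpose_apply]
  fin_cases i <;> fin_cases j <;>
    simp <;> grind

/-- Ψ(t) = P(t)·A·Δ(t)·Aᵀ is a fundamental solution of the Schrödinger
equation of the two-spin Rabi model: i·Ψ'(t) = H(t)·Ψ(t) (entrywise, i.e. the derivative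
of Ψ is -i·H(t)·Ψ(t)) and Ψ(0) = 1. -/
theorem two_spin_Rabi_fundamental_solution (l f : ℝ) (hl : 0 < l) (hf : 0 < f) :
    (∀ t : ℝ, ∀ i j : Fin 4,
      HasDerivAt (fun s : ℝ => Psi l f s i j)
        (((-Complex.I) • (Ham l f t * Psi l f t)) i j) t) ∧
    Psi l f 0 = 1 := by
  constructor
  · intro t i j
    have hR : (-Complex.I) • (Ham l f t * Psi l f t) =
        Pmat t * (Matrix.diagonal rabiN * AmatC l f +
          AmatC l f * Matrix.diagonal (rabiM l f (Real.sqrt (f^2 + l^2) : ℝ)))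
          * Dmat l f t * (AmatC l f)ᵀ := by
      rw [← rabi_intertwine l f hl hf t, Psi]
      simp only [Matrix.smul_mul, Matrix.mul_assoc]
    rw [hR]
    simp only [Psi, rabi_P, rabi_D]
    generalize AmatC l f = A
    generalize rabiM l f (Real.sqrt (f^2 + l^2) : ℝ) = M
    simp only [Matrix.mul_apply (N := Aᵀ), Matrix.mul_diagonal, Matrix.diagonal_mul,
      Matrix.add_apply, Matrix.transpose_apply]
    apply HasDerivAt.fun_sum
    intro k _
    have h := ((((rabi_exp_deriv (rabiN i) t).mul_const (A i k)).mul
      (rabi_exp_deriv (M k) t)).mul_const (A j k))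
    refine HasDerivAt.congr_deriv h ?_
    ring
  · have hP : Pmat 0 = 1 := by rw [rabi_P]; simp
    have hD : Dmat l f 0 = 1 := by rw [rabi_D]; simp
    rw [Psi, hP, hD, one_mul, mul_one, rabi_orth l f hl hf]
end

section
/- Let λ, f > 0 and β > 0, and let p(i,j) be the two-measurement work distribution of the two-spin Rabi model defined below. Then the mean work performed during one period equals ⟨w⟩ = Σ_{i,j=1}^{4} (E_j - E_i)·p(i,j) = (w₁ + w₂ + w₃) / (4·(f²+λ²)·z), where z = e^{β}(e^{βλ} + e^{β} + 1) + 1, w₁ = 4(e^{2β}-1)λ² - f²( e^{2β}(λ-4) - 2λ e^{β(λ+1)} + λ + 4 ), w₂ = f²λ( -2e^{β(λ+1)} + e^{2β} + 1 )·cos(2π√(f²+λ²)) - 8 e^{β} sinh(β) (f²+λ²)·cos(πf)·cos(πλ)·cos(π√(f²+λ²)), and w₃ = -4(e^{2β}-1)·λ·√(f²+λ²)·cos(πf)·sin(πλ)·sin(π√(f²+λ²)). -/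
open Matrix Complex Real

/-- The monodromy matrix S = A·Δ(2π)·Aᵀ. -/
noncomputable def Smat (l f : ℝ) : Matrix (Fin 4) (Fin 4) ℂ :=
  AmatC l f * Dmat l f (2 * Real.pi) * (AmatC l f)ᵀ

/-- The projectors P₁, P₂, P₃, P₄ onto the eigenstates of the static Hamiltonian H₀. -/
noncomputable def Proj : Fin 4 → Matrix (Fin 4) (Fin 4) ℂ :=
  ![!![1,0,0,0; 0,0,0,0; 0,0,0,0; 0,0,0,0],
    !![0,0,0,0; 0,0,0,0; 0,0,0,0; 0,0,0,1],
    !![0,0,0,0; 0,1/2,-(1/2),0; 0,-(1/2),1/2,0; 0,0,0,0],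
    !![0,0,0,0; 0,1/2,1/2,0; 0,1/2,1/2,0; 0,0,0,0]]

/-- The conditional probabilities π(j|i) = Tr(P_j · S · P_i · S*). -/
noncomputable def condProb (l f : ℝ) (j i : Fin 4) : ℂ :=
  (Proj j * Smat l f * Proj i * (Smat l f)ᴴ).trace

/-- The static energies E₁ = λ/4+1, E₂ = λ/4-1, E₃ = -3λ/4, E₄ = λ/4. -/
noncomputable def En (l : ℝ) : Fin 4 → ℝ := ![l/4 + 1, l/4 - 1, -(3*l/4), l/4]

/-- The partition function Z = Σₙ e^{-βEₙ}. -/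
noncomputable def Zpart (l β : ℝ) : ℝ := ∑ n : Fin 4, Real.exp (-β * En l n)

/-- The joint two-measurement probabilities p(i,j) = (e^{-βE_i}/Z)·Tr(P_j·S·P_i·S*). -/
noncomputable def jointProb (l f β : ℝ) (i j : Fin 4) : ℂ :=
  ((Real.exp (-β * En l i) / Zpart l β : ℝ) : ℂ) *
    (Proj j * Smat l f * Proj i * (Smat l f)ᴴ).trace

/-- The symmetric pattern of the monodromy matrix. -/
noncomputable def Spat (a b c e g h : ℂ) : Matrix (Fin 4) (Fin 4) ℂ :=
  !![a, b, e, c; b, g, h, e; e, h, g, b; c, e, b, a]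

lemma trace_pat (a b c e g h : ℂ) (i j : Fin 4) :
    (Proj j * Spat a b c e g h * Proj i * (Spat a b c e g h)ᴴ).trace =
      !![a * star a, c * star c, (b - e) * star (b - e) / 2, (b + e) * star (b + e) / 2;
         c * star c, a * star a, (b - e) * star (b - e) / 2, (b + e) * star (b + e) / 2;
         (b - e) * star (b - e) / 2, (b - e) * star (b - e) / 2, (g - h) * star (g - h), 0;
         (b + e) * star (b + e) / 2, (b + e) * star (b + e) / 2, 0,
           (g + h) * star (g + h)] i j := by
  fin_cases i <;> fin_cases j <;>
    simp [Proj, Spat, Matrix.trace, Matrix.mul_apply, Fin.sum_univ_succ, Matrix.vecMul, dotProduct,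
      Matrix.conjTranspose_apply] <;> ring

lemma trace_pat_exists (a b c e g h X Y W : ℂ) (hc : c * star c = X)
    (h1 : (b - e) * star (b - e) / 2 = Y) (h2 : (b + e) * star (b + e) / 2 = W) :
    ∃ u v w : ℂ, ∀ i j, (Proj j * Spat a b c e g h * Proj i * (Spat a b c e g h)ᴴ).trace =
      !![u, X, Y, W; X, u, Y, W; Y, Y, v, 0; W, W, 0, w] i j :=
  ⟨a * star a, (g - h) * star (g - h), (g + h) * star (g + h), fun i j => by
    rw [trace_pat, hc, h1, h2]⟩

lemma exp_form (x : ℝ) : Complex.exp (x * Complex.I) =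
    (Real.cos x : ℂ) + (Real.sin x : ℂ) * Complex.I := by
  rw [Complex.exp_mul_I]; simp

lemma star_form (x y : ℝ) : ((x : ℂ) + (y : ℂ) * Complex.I) * star ((x : ℂ) + (y : ℂ) * Complex.I)
    = ((x ^ 2 + y ^ 2 : ℝ) : ℂ) := by
  rw [show star ((x : ℂ) + (y : ℂ) * Complex.I) = (x : ℂ) - (y : ℂ) * Complex.I by
    simp [sub_eq_add_neg]]
  push_cast
  linear_combination (-(y : ℂ) ^ 2) * Complex.I_sq

lemma Smat_eq (l f m p R : ℝ) (hR : R = √(f ^ 2 + l ^ 2)) (hm : m = √(1 - l / R))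
    (hp : p = √(1 + l / R)) (d1 d2 d3 d4 : ℂ)
    (h1 : d1 = Complex.exp (((π * R + π * l / 2 : ℝ) : ℂ) * Complex.I))
    (h2 : d2 = Complex.exp (((π * f - π * l / 2 : ℝ) : ℂ) * Complex.I))
    (h3 : d3 = Complex.exp (((π * l / 2 - π * R : ℝ) : ℂ) * Complex.I))
    (h4 : d4 = Complex.exp (((-(π * f + π * l / 2) : ℝ) : ℂ) * Complex.I)) :
    Smat l f = Spat ((m ^ 2 * d1 + d2 + p ^ 2 * d3 + d4) / 4)
      ((m * p * d1 - d2 - m * p * d3 + d4) / 4)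
      ((-m ^ 2 * d1 + d2 - p ^ 2 * d3 + d4) / 4)
      ((-m * p * d1 - d2 + m * p * d3 + d4) / 4)
      ((p ^ 2 * d1 + d2 + m ^ 2 * d3 + d4) / 4)
      ((-p ^ 2 * d1 + d2 - m ^ 2 * d3 + d4) / 4) := by
  have hD : Dmat l f (2 * π) = Matrix.diagonal ![d1, d2, d3, d4] := by
    rw [Dmat, h1, h2, h3, h4, ← hR]
    have e1 : Complex.I * ((2 * π : ℝ) : ℂ) * (((2 * R + l) / 4 : ℝ) : ℂ)
        = ((π * R + π * l / 2 : ℝ) : ℂ) * Complex.I := by push_cast; ring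
    have e2 : Complex.I * ((2 * π : ℝ) : ℂ) * (((2 * f - l) / 4 : ℝ) : ℂ)
        = ((π * f - π * l / 2 : ℝ) : ℂ) * Complex.I := by push_cast; ring
    have e3 : Complex.I * ((2 * π : ℝ) : ℂ) * (((l - 2 * R) / 4 : ℝ) : ℂ)
        = ((π * l / 2 - π * R : ℝ) : ℂ) * Complex.I := by push_cast; ring
    have e4 : -Complex.I * ((2 * π : ℝ) : ℂ) * (((2 * f + l) / 4 : ℝ) : ℂ)
        = ((-(π * f + π * l / 2) : ℝ) : ℂ) * Complex.I := by push_cast; ring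
    rw [e1, e2, e3, e4]
  have hA : AmatC l f = !![-(m : ℂ) / 2, 1 / 2, p / 2, 1 / 2; -(p : ℂ) / 2, -1 / 2, -(m : ℂ) / 2, 1 / 2;
      (p : ℂ) / 2, -1 / 2, m / 2, 1 / 2; (m : ℂ) / 2, 1 / 2, -(p : ℂ) / 2, 1 / 2] := by
    simp only [AmatC, Amat, ← hR, ← hm, ← hp]
    ext i j
    fin_cases i <;> fin_cases j <;> simp <;> ring
  rw [Smat, hD, hA]
  ext i j
  fin_cases i <;> fin_cases j <;>
    simp [Spat, Matrix.mul_apply, Fin.sum_univ_succ, Matrix.diagonal_apply, 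
      Matrix.vecMul, dotProduct] <;> ring

lemma condProb_vals (l f R : ℝ) (hl : 0 < l) (hf : 0 < f) (hR : R = √(f ^ 2 + l ^ 2)) :
    ∃ u v w : ℂ, ∀ i j, (Proj j * Smat l f * Proj i * (Smat l f)ᴴ).trace =
      !![u, (((Real.cos (π * R) ^ 2 + (l / R) ^ 2 * Real.sin (π * R) ^ 2 + Real.cos (π * f) ^ 2
            - 2 * Real.cos (π * f) * (Real.cos (π * l) * Real.cos (π * R)
              + l / R * Real.sin (π * l) * Real.sin (π * R))) / 4 : ℝ) : ℂ),
            (((1 - (l / R) ^ 2) * Real.sin (π * R) ^ 2 / 2 : ℝ) : ℂ),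
            ((Real.sin (π * f) ^ 2 / 2 : ℝ) : ℂ);
         (((Real.cos (π * R) ^ 2 + (l / R) ^ 2 * Real.sin (π * R) ^ 2 + Real.cos (π * f) ^ 2
            - 2 * Real.cos (π * f) * (Real.cos (π * l) * Real.cos (π * R)
              + l / R * Real.sin (π * l) * Real.sin (π * R))) / 4 : ℝ) : ℂ), u,
            (((1 - (l / R) ^ 2) * Real.sin (π * R) ^ 2 / 2 : ℝ) : ℂ),
            ((Real.sin (π * f) ^ 2 / 2 : ℝ) : ℂ);
         (((1 - (l / R) ^ 2) * Real.sin (π * R) ^ 2 / 2 : ℝ) : ℂ),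
         (((1 - (l / R) ^ 2) * Real.sin (π * R) ^ 2 / 2 : ℝ) : ℂ), v, 0;
         ((Real.sin (π * f) ^ 2 / 2 : ℝ) : ℂ), ((Real.sin (π * f) ^ 2 / 2 : ℝ) : ℂ), 0,
         w] i j := by
  have hR0 : 0 < R := by rw [hR]; positivity
  have hR2 : R ^ 2 = f ^ 2 + l ^ 2 := by rw [hR]; exact Real.sq_sqrt (by positivity)
  have hlR : l / R ≤ 1 := by
    rw [div_le_one hR0]; nlinarith
  have hlR0 : 0 < l / R := by positivity
  have hm2 : √(1 - l / R) ^ 2 = 1 - l / R := Real.sq_sqrt (by linarith)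
  have hp2 : √(1 + l / R) ^ 2 = 1 + l / R := Real.sq_sqrt (by linarith)
  have hS := Smat_eq l f _ _ R hR rfl rfl _ _ _ _ rfl rfl rfl rfl
  generalize √(1 - l / R) = m at *
  generalize √(1 + l / R) = p at *
  generalize l / R = α at *
  have hmp : (m * p) ^ 2 = 1 - α ^ 2 := by rw [mul_pow, hm2, hp2]; ring
  have cl : Real.cos (π * l) = Real.cos (π * l / 2) ^ 2 - Real.sin (π * l / 2) ^ 2 := by
    rw [show π * l = 2 * (π * l / 2) by ring, Real.cos_two_mul, Real.sin_sq,
      show 2 * (π * l / 2) / 2 = π * l / 2 by ring]; ring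
  have sl : Real.sin (π * l) = 2 * Real.sin (π * l / 2) * Real.cos (π * l / 2) := by
    rw [← Real.sin_two_mul]; congr 1; ring
  have hg := Real.sin_sq_add_cos_sq (π * l / 2)
  rw [hS]
  apply trace_pat_exists
  all_goals
    simp only [exp_form]
    simp only [Real.cos_neg, Real.sin_neg, Real.cos_add, Real.cos_sub, Real.sin_add, Real.sin_sub]
  all_goals
    try rw [cl, sl]
  all_goals
    generalize Real.cos (π * l / 2) = c at *
    generalize Real.sin (π * l / 2) = s at *
    generalize Real.cos (π * R) = cR at *
    generalize Real.sin (π * R) = sR at *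
    generalize Real.cos (π * f) = cf at *
    generalize Real.sin (π * f) = sf at *
    have hmC : (m : ℂ) ^ 2 = 1 - α := by exact_mod_cast congrArg Complex.ofReal hm2
    have hpC : (p : ℂ) ^ 2 = 1 + α := by exact_mod_cast congrArg Complex.ofReal hp2
  · rw [neg_mul, hmC, hpC]
    have := star_form ((-c * cR - α * s * sR + c * cf) / 2) ((-s * cR + α * c * sR - s * cf) / 2)
    convert this using 1
    · congr 1 <;> [skip; congr 1] <;> push_cast <;> ring
    · congr 1
      linear_combination (-(cR ^ 2 + α ^ 2 * sR ^ 2 + cf ^ 2) / 4) * hg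
  · have := star_form (-(m * p) * sR * s) ((m * p) * sR * c)
    have h2 := congrArg (· / (2 : ℂ)) this
    convert h2 using 1
    · congr 2 <;> [skip; congr 1] <;> push_cast <;> ring
    · rw [← hmp]; rw [← Complex.ofReal_ofNat, ← Complex.ofReal_div]
      congr 1
      linear_combination (-1) * ((m * p) ^ 2 * sR ^ 2 / 2 * hg)
  · have := star_form (-sf * s) (-sf * c)
    have h2 := congrArg (· / (2 : ℂ)) this
    convert h2 using 1
    · congr 2 <;> [skip; congr 1] <;> push_cast <;> ring
    · rw [← Complex.ofReal_ofNat, ← Complex.ofReal_div]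
      congr 1
      linear_combination (-1) * (sf ^ 2 / 2 * hg)

/-- closed form for the mean work performed on the two-spin Rabi system
during one period: ⟨w⟩ = Σ_{i,j}(E_j-E_i)p(i,j) = (w₁+w₂+w₃)/(4(f²+λ²)z). -/
theorem two_spin_Rabi_mean_work (l f β : ℝ) (hl : 0 < l) (hf : 0 < f) (hβ : 0 < β)
    (z w₁ w₂ w₃ : ℝ)
    (hz : z = Real.exp β * (Real.exp (β*l) + Real.exp β + 1) + 1)
    (hw₁ : w₁ = 4 * (Real.exp (2*β) - 1) * l^2 -
      f^2 * (Real.exp (2*β) * (l - 4) - 2 * l * Real.exp (β*(l+1)) + l + 4))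
    (hw₂ : w₂ = f^2 * l * (-2 * Real.exp (β*(l+1)) + Real.exp (2*β) + 1) *
        Real.cos (2 * Real.pi * Real.sqrt (f^2 + l^2)) -
      8 * Real.exp β * Real.sinh β * (f^2 + l^2) *
        Real.cos (Real.pi * f) * Real.cos (Real.pi * l) *
        Real.cos (Real.pi * Real.sqrt (f^2 + l^2)))
    (hw₃ : w₃ = -4 * (Real.exp (2*β) - 1) * l * Real.sqrt (f^2 + l^2) *
      Real.cos (Real.pi * f) * Real.sin (Real.pi * l) *
      Real.sin (Real.pi * Real.sqrt (f^2 + l^2))) :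
    ∑ i : Fin 4, ∑ j : Fin 4, ((En l j - En l i : ℝ) : ℂ) * jointProb l f β i j =
      (((w₁ + w₂ + w₃) / (4 * (f^2 + l^2) * z) : ℝ) : ℂ) := by
  obtain ⟨u, v, w, hq⟩ := condProb_vals l f _ hl hf rfl
  have hR0 : 0 < √(f ^ 2 + l ^ 2) := by positivity
  have hR2 : √(f ^ 2 + l ^ 2) ^ 2 = f ^ 2 + l ^ 2 := Real.sq_sqrt (by positivity)
  have hz0 : 0 < z := by rw [hz]; positivity
  have hZ : Zpart l β = Real.exp (-β * (l / 4 + 1)) * z := by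
    simp only [Zpart, En, Fin.sum_univ_four, hz]
    simp only [Matrix.cons_val, mul_add, ← Real.exp_add, mul_one]
    ring_nf
  have hw : ∀ i, Real.exp (-β * En l i) / Zpart l β =
      ![1, Real.exp β ^ 2, Real.exp (β * (l + 1)), Real.exp β] i / z := by
    intro i
    rw [hZ, div_eq_div_iff (by positivity) hz0.ne', ← mul_assoc]
    congr 1
    fin_cases i <;> simp [En, ← Real.exp_add, ← Real.exp_nat_mul] <;> ring
  simp only [jointProb, hq, hw, Fin.sum_univ_four]
  simp only [Matrix.cons_val, Matrix.of_apply, En, Matrix.cons_val', sub_self, Complex.ofReal_zero, zero_mul, mul_zero]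
  have e2 : Real.exp (2 * β) = Real.exp β ^ 2 := by rw [← Real.exp_nat_mul]; norm_num
  have es : Real.exp β * Real.sinh β = (Real.exp β ^ 2 - 1) / 2 := by
    rw [Real.sinh_eq, Real.exp_neg]; field_simp
  have c2 : Real.cos (2 * π * √(f ^ 2 + l ^ 2)) = 1 - 2 * Real.sin (π * √(f ^ 2 + l ^ 2)) ^ 2 := by
    rw [mul_assoc, Real.cos_two_mul, Real.cos_sq']; ring
  have cR := Real.cos_sq' (π * √(f ^ 2 + l ^ 2))
  have cf := Real.sin_sq (π * f)
  rw [e2] at hw₁ hw₂ hw₃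
  rw [mul_assoc 8, es, c2] at hw₂
  norm_cast
  rw [hw₁, hw₂, hw₃, cR, cf]
  clear hw₁ hw₂ hw₃ hq hw hZ hz
  have hf2 : f ^ 2 = √(f ^ 2 + l ^ 2) ^ 2 - l ^ 2 := by linarith
  generalize √(f ^ 2 + l ^ 2) = R at *
  rw [← hR2]
  rw [hf2]
  field_simp
  ring
end

section
/- Fix β > 0 and for f > 0 let ⟨w⟩(f,f,β) = Σ_{i,j=1}^{4} (E_j - E_i)·p(i,j) be the mean work of the two-spin Rabi model evaluated at coupling λ = f. Then ⟨w⟩(f,f,β) is asymptotic to (1/2)·f·sin²(√2·π·f) as f → ∞, in the sense that the difference ⟨w⟩(f,f,β) - (1/2)·f·sin²(√2·π·f) tends to 0 as f → ∞. -/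
open Matrix Complex Real

/-- The mean work ⟨w⟩(f,f,β) of the two-spin Rabi model at coupling λ = f. -/
noncomputable def meanWork (f β : ℝ) : ℂ :=
  ∑ i : Fin 4, ∑ j : Fin 4, ((En f j - En f i : ℝ) : ℂ) * jointProb f f β i j

lemma aux_tr0 (S : Matrix (Fin 4) (Fin 4) ℂ) :
    (Proj 0 * S * Proj 2 * Sᴴ).trace = (1/2) * ((S 0 1 - S 0 2) * star (S 0 1 - S 0 2)) := by
  simp only [Matrix.trace, Fin.sum_univ_four, Matrix.mul_apply, Matrix.diag_apply]
  simp [Proj]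
  ring

lemma aux_tr1 (S : Matrix (Fin 4) (Fin 4) ℂ) :
    (Proj 1 * S * Proj 2 * Sᴴ).trace = (1/2) * ((S 3 1 - S 3 2) * star (S 3 1 - S 3 2)) := by
  simp only [Matrix.trace, Fin.sum_univ_four, Matrix.mul_apply, Matrix.diag_apply]
  simp [Proj]
  ring

lemma aux_tr3 (S : Matrix (Fin 4) (Fin 4) ℂ) :
    (Proj 3 * S * Proj 2 * Sᴴ).trace = (1/4) * ((S 1 1 - S 1 2 + (S 2 1 - S 2 2)) *
      star (S 1 1 - S 1 2 + (S 2 1 - S 2 2))) := by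
  simp only [Matrix.trace, Fin.sum_univ_four, Matrix.mul_apply, Matrix.diag_apply]
  simp [Proj]
  ring

lemma aux_S (l f : ℝ) (i j : Fin 4) : Smat l f i j =
    ∑ m, AmatC l f i m * Dmat l f (2 * π) m m * AmatC l f j m := by
  simp only [Smat, Matrix.mul_apply, Dmat, Matrix.diagonal_apply, Matrix.transpose_apply]
  simp

lemma aux_sqrt (f : ℝ) (hf : 0 < f) : Real.sqrt (f^2 + f^2) = Real.sqrt 2 * f := by
  rw [← two_mul, Real.sqrt_mul (by norm_num), Real.sqrt_sq hf.le]

lemma aux_alpha (f : ℝ) (hf : 0 < f) : f / Real.sqrt (f^2 + f^2) = 1 / Real.sqrt 2 := by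
  rw [aux_sqrt f hf]
  field_simp

lemma aux_alpha_le : 1 / Real.sqrt 2 ≤ 1 := by
  rw [div_le_one (by positivity)]
  exact Real.one_le_sqrt.2 (by norm_num)

lemma aux_ab : (Real.sqrt (1 - 1 / Real.sqrt 2) * Real.sqrt (1 + 1 / Real.sqrt 2))^2 = 1/2 := by
  rw [mul_pow, Real.sq_sqrt (by linarith [aux_alpha_le]), Real.sq_sqrt (by positivity)]
  have : (1 / Real.sqrt 2)^2 = 1/2 := by
    rw [div_pow, Real.sq_sqrt (by norm_num)]; norm_num
  linarith

lemma aux_d (f : ℝ) (hf : 0 < f) :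
    (Dmat f f (2 * π) 0 0 - Dmat f f (2 * π) 2 2) * star (Dmat f f (2 * π) 0 0 - Dmat f f (2 * π) 2 2)
      = ((4 * Real.sin (Real.sqrt 2 * π * f)^2 : ℝ) : ℂ) := by
  have h0 : Dmat f f (2 * π) 0 0 = Complex.exp ((π * f / 2 : ℝ) * I) *
      Complex.exp ((Real.sqrt 2 * π * f : ℝ) * I) := by
    simp only [Dmat, Matrix.diagonal_apply, aux_sqrt f hf, ← Complex.exp_add]
    simp
    congr 1; ring
  have h2 : Dmat f f (2 * π) 2 2 = Complex.exp ((π * f / 2 : ℝ) * I) *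
      Complex.exp ((-(Real.sqrt 2 * π * f) : ℝ) * I) := by
    simp only [Dmat, Matrix.diagonal_apply, aux_sqrt f hf, ← Complex.exp_add]
    simp
    congr 1; ring
  have e : Dmat f f (2 * π) 0 0 - Dmat f f (2 * π) 2 2 = Complex.exp ((π * f / 2 : ℝ) * I) *
      (2 * I * (Real.sin (Real.sqrt 2 * π * f) : ℝ)) := by
    rw [h0, h2, ← mul_sub]
    congr 1
    rw [Complex.exp_mul_I, Complex.exp_mul_I]
    push_cast
    rw [Complex.cos_neg, Complex.sin_neg]
    ring
  rw [e]
  have hs : ∀ z : ℂ, z * star z = ((‖z‖^2 : ℝ) : ℂ) := by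
    intro z
    have := Complex.mul_conj' z
    push_cast
    exact this
  rw [hs, norm_mul, Complex.norm_exp_ofReal_mul_I]
  congr 1
  rw [norm_mul, norm_mul, Complex.norm_real, Complex.norm_I, Real.norm_eq_abs, one_mul, mul_pow,
    sq_abs]
  norm_num

lemma aux_row (f : ℝ) (hf : 0 < f) :
    (Smat f f 0 1 - Smat f f 0 2 =
      ((Real.sqrt (1 - 1 / Real.sqrt 2) * Real.sqrt (1 + 1 / Real.sqrt 2) : ℝ) : ℂ) / 2 *
        (Dmat f f (2 * π) 0 0 - Dmat f f (2 * π) 2 2)) ∧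
    (Smat f f 3 1 - Smat f f 3 2 =
      -(((Real.sqrt (1 - 1 / Real.sqrt 2) * Real.sqrt (1 + 1 / Real.sqrt 2) : ℝ) : ℂ) / 2 *
        (Dmat f f (2 * π) 0 0 - Dmat f f (2 * π) 2 2))) ∧
    (Smat f f 1 1 - Smat f f 1 2 + (Smat f f 2 1 - Smat f f 2 2) = 0) := by
  simp only [aux_S, Fin.sum_univ_four]
  generalize Dmat f f (2 * π) 0 0 = d0
  generalize Dmat f f (2 * π) 1 1 = d1
  generalize Dmat f f (2 * π) 2 2 = d2
  generalize Dmat f f (2 * π) 3 3 = d3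
  simp only [AmatC, Amat, aux_alpha f hf]
  generalize Real.sqrt (1 - 1 / Real.sqrt 2) = a
  generalize Real.sqrt (1 + 1 / Real.sqrt 2) = b
  refine ⟨?_, ?_, ?_⟩ <;> simp <;> ring

lemma aux_ground (f : ℝ) (hf : 0 < f) :
    condProb f f 0 2 = ((Real.sin (Real.sqrt 2 * π * f)^2 / 4 : ℝ) : ℂ) ∧
    condProb f f 1 2 = ((Real.sin (Real.sqrt 2 * π * f)^2 / 4 : ℝ) : ℂ) ∧
    condProb f f 3 2 = 0 := by
  obtain ⟨h0, h1, h3⟩ := aux_row f hf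
  have hd := aux_d f hf
  have hab : (((Real.sqrt (1 - 1 / Real.sqrt 2) * Real.sqrt (1 + 1 / Real.sqrt 2) : ℝ) : ℂ))^2
      = 1/2 := by
    rw [← Complex.ofReal_pow, aux_ab]; norm_num
  unfold condProb
  rw [aux_tr0, aux_tr1, aux_tr3, h0, h1, h3]
  generalize (Real.sqrt (1 - 1 / Real.sqrt 2) * Real.sqrt (1 + 1 / Real.sqrt 2) : ℝ) = c at *
  generalize Dmat f f (2 * π) 0 0 - Dmat f f (2 * π) 2 2 = d at *
  have key : (1/2 : ℂ) * ((c : ℂ) / 2 * d * star ((c : ℂ) / 2 * d)) =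
      ((Real.sin (Real.sqrt 2 * π * f)^2 / 4 : ℝ) : ℂ) := by
    have : star ((c : ℂ) / 2 * d) = (c : ℂ) / 2 * star d := by simp
    rw [this]
    calc (1/2 : ℂ) * ((c : ℂ) / 2 * d * ((c : ℂ) / 2 * star d))
        = (1/8) * (c : ℂ)^2 * (d * star d) := by ring
      _ = _ := by rw [hab, hd]; push_cast; ring
  refine ⟨key, ?_, by simp⟩
  rw [star_neg, neg_mul_neg]; exact key

lemma aux_mul_bd (M N : Matrix (Fin 4) (Fin 4) ℂ) (a b : ℝ) (ha : 0 ≤ a)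
    (hM : ∀ i j, ‖M i j‖ ≤ a) (hN : ∀ i j, ‖N i j‖ ≤ b) (i j : Fin 4) :
    ‖(M * N) i j‖ ≤ 4 * (a * b) := by
  rw [Matrix.mul_apply]
  refine (norm_sum_le _ _).trans ?_
  calc ∑ k, ‖M i k * N k j‖ ≤ ∑ _k : Fin 4, a * b := by
        refine Finset.sum_le_sum fun k _ => ?_
        rw [norm_mul]
        exact mul_le_mul (hM _ _) (hN _ _) (norm_nonneg _) ha
    _ = _ := by simp

lemma aux_A_bd (f : ℝ) (hf : 0 < f) (i j : Fin 4) : ‖AmatC f f i j‖ ≤ 1 := by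
  have h1 : Real.sqrt (1 - 1 / Real.sqrt 2) ≤ 2 := by
    rw [Real.sqrt_le_left (by norm_num)]
    have : 0 ≤ 1 / Real.sqrt 2 := by positivity
    linarith
  have h2 : Real.sqrt (1 + 1 / Real.sqrt 2) ≤ 2 := by
    rw [Real.sqrt_le_left (by norm_num)]
    linarith [aux_alpha_le]
  have h3 := Real.sqrt_nonneg (1 - 1 / Real.sqrt 2)
  have h4 := Real.sqrt_nonneg (1 + 1 / Real.sqrt 2)
  simp only [AmatC, Amat, aux_alpha f hf, Matrix.map_apply, Complex.norm_real, Real.norm_eq_abs]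
  generalize Real.sqrt (1 - 1 / Real.sqrt 2) = a at *
  generalize Real.sqrt (1 + 1 / Real.sqrt 2) = b at *
  rw [abs_le]
  fin_cases i <;> fin_cases j <;> simp <;> constructor <;> linarith

lemma aux_D_bd (f : ℝ) (i j : Fin 4) : ‖Dmat f f (2 * π) i j‖ ≤ 1 := by
  rw [Dmat, Matrix.diagonal_apply]
  split_ifs with h
  · fin_cases i <;> simp [Complex.norm_exp]
  · simp

lemma aux_P_bd (n i j : Fin 4) : ‖Proj n i j‖ ≤ 1 := by
  fin_cases n <;> fin_cases i <;> fin_cases j <;> simp [Proj] <;> norm_num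

lemma aux_prob_bd : ∃ C : ℝ, 0 ≤ C ∧ ∀ f : ℝ, 0 < f → ∀ i j, ‖condProb f f j i‖ ≤ C := by
  refine ⟨4 * (4 * ((4 * ((4 * (1 * 16)) * 1)) * 16)), by norm_num, fun f hf i j => ?_⟩
  have hS : ∀ i j, ‖Smat f f i j‖ ≤ 16 := by
    intro i j
    have := aux_mul_bd _ _ _ 1 (by norm_num)
      (aux_mul_bd _ _ 1 1 (by norm_num) (aux_A_bd f hf) (aux_D_bd f))
      (fun i j => aux_A_bd f hf j i : ∀ i j, ‖(AmatC f f)ᵀ i j‖ ≤ 1) i j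
    norm_num at this
    exact this
  have hS' : ∀ i j, ‖(Smat f f)ᴴ i j‖ ≤ 16 := by
    intro i j
    rw [Matrix.conjTranspose_apply, norm_star]; exact hS j i
  have h := aux_mul_bd _ _ _ _ (by norm_num) (aux_mul_bd _ _ _ _ (by norm_num)
    (aux_mul_bd _ _ _ _ (by norm_num) (aux_P_bd j) hS) (aux_P_bd i)) hS'
  rw [condProb, Matrix.trace]
  refine (norm_sum_le _ _).trans ((Finset.sum_le_sum fun k _ => h k k).trans ?_)
  simp

/-- The Boltzmann weights. -/
noncomputable def auxW (f β : ℝ) (i : Fin 4) : ℝ := Real.exp (-β * En f i) / Zpart f β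

lemma aux_Z_pos (f β : ℝ) : 0 < Zpart f β := by
  unfold Zpart; positivity

lemma auxW_nonneg (f β : ℝ) (i : Fin 4) : 0 ≤ auxW f β i :=
  div_nonneg (Real.exp_pos _).le (aux_Z_pos f β).le

lemma auxW_sum (f β : ℝ) : ∑ i, auxW f β i = 1 := by
  unfold auxW
  rw [← Finset.sum_div]
  exact div_self (aux_Z_pos f β).ne'

lemma auxW_le (f β : ℝ) (hβ : 0 < β) (i : Fin 4) (hi : i ≠ 2) :
    auxW f β i ≤ Real.exp (-β * (f - 1)) := by
  unfold auxW
  rw [div_le_iff₀ (aux_Z_pos f β)]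
  have hZ : Real.exp (-β * En f 2) ≤ Zpart f β :=
    Finset.single_le_sum (f := fun n => Real.exp (-β * En f n))
      (fun _ _ => (Real.exp_pos _).le) (Finset.mem_univ 2)
  refine le_trans ?_ (mul_le_mul_of_nonneg_left hZ (Real.exp_pos _).le)
  rw [← Real.exp_add, Real.exp_le_exp]
  have : f - 1 + En f 2 ≤ En f i := by
    fin_cases i <;> simp [En] at hi ⊢ <;> linarith
  nlinarith

lemma aux_En (f : ℝ) (hf : 0 < f) (i j : Fin 4) : |En f j - En f i| ≤ f + 2 := by
  rw [abs_le]
  fin_cases i <;> fin_cases j <;> simp [En] <;> constructor <;> linarith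

lemma aux_decomp (f β : ℝ) (hf : 0 < f) :
    meanWork f β - (((1/2) * f * Real.sin (Real.sqrt 2 * Real.pi * f)^2 : ℝ) : ℂ) =
      ∑ i ∈ Finset.univ.erase (2 : Fin 4), (auxW f β i : ℂ) *
        (∑ j, ((En f j - En f i : ℝ) : ℂ) * condProb f f j i -
          (((1/2) * f * Real.sin (Real.sqrt 2 * Real.pi * f)^2 : ℝ) : ℂ)) := by
  have hX : ∑ j, ((En f j - En f 2 : ℝ) : ℂ) * condProb f f j 2 =
      (((1/2) * f * Real.sin (Real.sqrt 2 * Real.pi * f)^2 : ℝ) : ℂ) := by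
    obtain ⟨h0, h1, h3⟩ := aux_ground f hf
    rw [Fin.sum_univ_four, h0, h1, h3]
    simp [En]
    ring
  have hM : meanWork f β = ∑ i, (auxW f β i : ℂ) *
      ∑ j, ((En f j - En f i : ℝ) : ℂ) * condProb f f j i := by
    unfold meanWork
    refine Finset.sum_congr rfl fun i _ => ?_
    rw [Finset.mul_sum]
    refine Finset.sum_congr rfl fun j _ => ?_
    unfold jointProb condProb auxW
    ring
  have h1 : ∑ i, (auxW f β i : ℂ) = 1 := by
    rw [← Complex.ofReal_sum, auxW_sum]; simp
  rw [Finset.sum_erase]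
  · simp_rw [mul_sub]
    rw [Finset.sum_sub_distrib, ← hM, ← Finset.sum_mul, h1, one_mul]
  · rw [hX, sub_self, mul_zero]

/-- for fixed β > 0 the mean work at λ = f is asymptotic to
(1/2)·f·sin²(√2·π·f) as f → ∞. -/
theorem two_spin_Rabi_mean_work_asymptotics (β : ℝ) (hβ : 0 < β) :
    Filter.Tendsto
      (fun f : ℝ => meanWork f β -
        (((1/2) * f * Real.sin (Real.sqrt 2 * Real.pi * f)^2 : ℝ) : ℂ))
      Filter.atTop (nhds 0) := by
  obtain ⟨C, hC, hCb⟩ := aux_prob_bd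
  have hlim : Filter.Tendsto (fun f : ℝ => 3 * (4 * C + 1) * Real.exp β * (f * Real.exp (-β * f) +
      2 * Real.exp (-β * f))) Filter.atTop (nhds 0) := by
    have e1 : Filter.Tendsto (fun f : ℝ => f * Real.exp (-β * f)) Filter.atTop (nhds 0) := by
      have := tendsto_rpow_mul_exp_neg_mul_atTop_nhds_zero 1 β hβ
      simpa using this
    have e2 : Filter.Tendsto (fun f : ℝ => Real.exp (-β * f)) Filter.atTop (nhds 0) := by
      refine Real.tendsto_exp_atBot.comp ?_
      exact Filter.tendsto_id.const_mul_atTop_of_neg (by linarith)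
    simpa using (e1.add (e2.const_mul 2)).const_mul (3 * (4 * C + 1) * Real.exp β)
  refine squeeze_zero_norm' ?_ hlim
  filter_upwards [Filter.eventually_gt_atTop 0] with f hf
  rw [aux_decomp f β hf]
  refine (norm_sum_le _ _).trans ?_
  have hb : ∀ i ∈ Finset.univ.erase (2 : Fin 4), ‖(auxW f β i : ℂ) *
        (∑ j, ((En f j - En f i : ℝ) : ℂ) * condProb f f j i -
          (((1/2) * f * Real.sin (Real.sqrt 2 * Real.pi * f)^2 : ℝ) : ℂ))‖ ≤
      Real.exp (-β * (f - 1)) * ((4 * C + 1) * (f + 2)) := by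
    intro i hi
    rw [norm_mul, Complex.norm_real, Real.norm_eq_abs, abs_of_nonneg (auxW_nonneg f β i)]
    refine mul_le_mul (auxW_le f β hβ i (Finset.ne_of_mem_erase hi)) ?_ (norm_nonneg _)
      (Real.exp_pos _).le
    refine (norm_sub_le _ _).trans ?_
    have b1 : ‖∑ j, ((En f j - En f i : ℝ) : ℂ) * condProb f f j i‖ ≤ 4 * ((f + 2) * C) := by
      refine (norm_sum_le _ _).trans ?_
      calc _ ≤ ∑ _j : Fin 4, (f + 2) * C := by
            refine Finset.sum_le_sum fun j _ => ?_
            rw [norm_mul, Complex.norm_real, Real.norm_eq_abs]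
            exact mul_le_mul (aux_En f hf i j) (hCb f hf i j) (norm_nonneg _) (by linarith)
        _ = _ := by simp
    have b2 : ‖(((1/2) * f * Real.sin (Real.sqrt 2 * Real.pi * f)^2 : ℝ) : ℂ)‖ ≤ f + 2 := by
      rw [Complex.norm_real, Real.norm_eq_abs, abs_of_nonneg (by positivity)]
      have := Real.sin_sq_le_one (Real.sqrt 2 * Real.pi * f)
      nlinarith
    linarith
  refine (Finset.sum_le_sum hb).trans ?_
  rw [Finset.sum_const, Finset.card_erase_of_mem (Finset.mem_univ _)]
  have : Real.exp (-β * (f - 1)) = Real.exp β * Real.exp (-β * f) := by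
    rw [← Real.exp_add]; congr 1; ring
  rw [this]
  simp
  apply le_of_eq
  ring
end
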